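/- For every permutation γ of {1,…,r}, the set γ·𝒟⁺ intersects W⁰·𝒟⁺ (the union of the sets w·𝒟⁺ over w ∈ W⁰) if and only if γ ∈ W⁰. -/

import Mathlib

/-!
Weakly decreasing vectors form a fundamental domain for coordinate permutations: a rearrangement of
one of them that is still weakly decreasing is the vector itself. So a point of `γ·𝒟⁺ ∩ w·𝒟⁺` is of
the form `γ·x = w·x` with a single `x ∈ 𝒟⁺`, and `γw⁻¹` fixes `x`. The stabilizer of a weakly
decreasing vector is generated by the adjacent transpositions fixing it, which puts `γ` in the group
generated by all adjacent transpositions with a fixed point in `𝒟⁺`. Discarding the fixed point `0`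
does not change this group: if `0 ∈ 𝒟⁺`, then `𝒟⁺` contains a small positive constant vector, which
is fixed by every permutation.
-/

open Equiv Filter Set Topology

variable {ι α : Type*}

theorem exists_pos_const_mem_of_isOpen [Preorder α] [Zero α] [TopologicalSpace α]
    [(𝓝[>] (0 : α)).NeBot] {U : Set (ι → α)} (hU : IsOpen U) (h0 : 0 ∈ U) :
    ∃ ε > 0, Function.const ι ε ∈ U := by
  have hconst : Continuous (Function.const ι : α → ι → α) := continuous_pi fun _ => continuous_id
  have hnear : ∀ᶠ ε in 𝓝[>] (0 : α), Function.const ι ε ∈ U :=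
    nhdsWithin_le_nhds ((hU.preimage hconst).mem_nhds h0)
  exact (eventually_mem_nhdsWithin.and hnear).exists

variable [LinearOrder ι]

section Rearrangement

theorem exists_le_and_le_apply [Finite ι] {f : ι → ι} (hf : f.Injective) (i : ι) :
    ∃ j ≤ i, i ≤ f j := by
  by_contra! hlt
  have hle : (Iic i).ncard ≤ (Iio i).ncard := ncard_le_ncard_of_injOn f hlt hf.injOn
  have hgt : (Iio i).ncard < (Iic i).ncard := ncard_lt_ncard Iio_ssubset_Iic_self
  exact hle.not_gt hgt

theorem comp_perm_eq_of_antitone [Finite ι] [PartialOrder α] {x : ι → α} {τ : Perm ι}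
    (hx : Antitone x) (hxτ : Antitone (x ∘ τ)) : x ∘ τ = x := by
  funext i
  apply le_antisymm
  · obtain ⟨j, hji, hij⟩ := exists_le_and_le_apply τ.injective i
    exact (hxτ hji).trans (hx hij)
  · obtain ⟨j, hji, hij⟩ := exists_le_and_le_apply τ.symm.injective i
    calc x i ≤ x j := hx hji
      _ = (x ∘ τ) (τ.symm j) := by simp
      _ ≤ (x ∘ τ) i := hxτ hij

end Rearrangement

section WallSwaps

/-- The adjacent transpositions fixing some point of `S`, i.e. the reflections in those walls of
the chamber of weakly decreasing vectors that meet `S`. -/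
def wallSwaps (S : Set (ι → α)) : Set (Perm ι) :=
  {σ | ∃ k l, k ⋖ l ∧ σ = swap k l ∧ ∃ x ∈ S, x k = x l}

theorem wallSwaps_mono {S T : Set (ι → α)} (h : S ⊆ T) : wallSwaps S ⊆ wallSwaps T :=
  fun _ ⟨k, l, hkl, hσ, x, hx, hxkl⟩ => ⟨k, l, hkl, hσ, x, h hx, hxkl⟩

theorem isSwap_of_mem_wallSwaps {S : Set (ι → α)} {σ : Perm ι} (hσ : σ ∈ wallSwaps S) :
    σ.IsSwap := by
  obtain ⟨k, l, hkl, rfl, -⟩ := hσ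
  exact ⟨k, l, hkl.ne, rfl⟩

theorem mem_orbit_closure_wallSwaps_singleton [LocallyFiniteOrder ι] [PartialOrder α] {x : ι → α}
    (hx : Antitone x) {i j : ι} (hij : i ≤ j) (hxij : x i = x j) :
    j ∈ MulAction.orbit (Subgroup.closure (wallSwaps {x})) i := by
  induction le_iff_reflTransGen_covBy.mp hij with
  | refl => exact MulAction.mem_orbit_self i
  | @tail k l hik hkl ih =>
    replace hik : i ≤ k := le_iff_reflTransGen_covBy.mpr hik
    have hxkl : x k = x l := le_antisymm ((hx hik).trans_eq hxij) (hx hkl.le)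
    have hswap : swap k l ∈ Subgroup.closure (wallSwaps {x}) :=
      Subgroup.subset_closure ⟨k, l, hkl, rfl, x, rfl, hxkl⟩
    rw [← MulAction.orbit_eq_iff.mpr (ih hik (hxij.trans hxkl.symm))]
    exact ⟨⟨swap k l, hswap⟩, swap_apply_left k l⟩

theorem mem_closure_wallSwaps_singleton_of_comp_eq [Finite ι] [PartialOrder α]
    {x : ι → α} (hx : Antitone x) {τ : Perm ι} (hτ : x ∘ τ = x) :
    τ ∈ Subgroup.closure (wallSwaps {x}) := by
  have := Fintype.ofFinite ι
  let := Fintype.toLocallyFiniteOrder (α := ι)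
  refine (mem_closure_isSwap fun _ => isSwap_of_mem_wallSwaps).mpr ⟨toFinite _, fun i => ?_⟩
  have hτi : x (τ i) = x i := congrFun hτ i
  rcases le_total i (τ i) with hle | hle
  · exact mem_orbit_closure_wallSwaps_singleton hx hle hτi.symm
  · exact MulAction.mem_orbit_symm.mp (mem_orbit_closure_wallSwaps_singleton hx hle hτi)

theorem image_comp_inter_iUnion_closure_wallSwaps_nonempty_iff [Finite ι] [PartialOrder α]
    {S : Set (ι → α)} (hS : ∀ x ∈ S, Antitone x) (hne : S.Nonempty) (γ : Perm ι) :
    ((fun x => x ∘ γ) '' S ∩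
        ⋃ σ ∈ Subgroup.closure (wallSwaps S), (fun x => x ∘ σ) '' S).Nonempty ↔
      γ ∈ Subgroup.closure (wallSwaps S) := by
  constructor
  · rintro ⟨-, ⟨x, hx, rfl⟩, hmem⟩
    obtain ⟨σ, hσ, y, hy, hyx : y ∘ σ = x ∘ γ⟩ := mem_iUnion₂.mp hmem
    have hxy : x ∘ (γ * σ⁻¹ : Perm ι) = y := by
      rw [Perm.coe_mul, ← Function.comp_assoc, ← hyx, Function.comp_assoc, ← Perm.coe_mul,
        mul_inv_cancel, Perm.coe_one, Function.comp_id]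
    have hfix : x ∘ (γ * σ⁻¹ : Perm ι) = x :=
      comp_perm_eq_of_antitone (hS x hx) (hxy ▸ hS y hy)
    have hγσ : γ * σ⁻¹ ∈ Subgroup.closure (wallSwaps S) :=
      Subgroup.closure_mono (wallSwaps_mono (singleton_subset_iff.mpr hx))
        (mem_closure_wallSwaps_singleton_of_comp_eq (hS x hx) hfix)
    exact (Subgroup.mul_mem_cancel_right _ (inv_mem hσ)).mp hγσ
  · intro hγ
    obtain ⟨x, hx⟩ := hne
    exact ⟨x ∘ γ, mem_image_of_mem _ hx, mem_iUnion₂.mpr ⟨γ, hγ, mem_image_of_mem _ hx⟩⟩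

end WallSwaps

section Chamber

variable (ι α) in
/-- The closed chamber `C⁺` of weakly decreasing vectors with nonnegative coordinates. -/
def closedChamber [Preorder α] [Zero α] : Set (ι → α) :=
  {x | Antitone x ∧ 0 ≤ x}

variable [TopologicalSpace α] [Zero α]

theorem wallSwaps_inter_closedChamber_sdiff_zero [Preorder α] [(𝓝[>] (0 : α)).NeBot]
    {U : Set (ι → α)} (hU : IsOpen U) :
    wallSwaps ((U ∩ closedChamber ι α) \ {0}) = wallSwaps (U ∩ closedChamber ι α) := by
  refine (wallSwaps_mono sdiff_subset).antisymm ?_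
  rintro σ ⟨k, l, hkl, rfl, x, hx, hxkl⟩
  by_cases hx0 : x = 0
  · obtain ⟨ε, hε, hεU⟩ := exists_pos_const_mem_of_isOpen hU (hx0 ▸ hx.1)
    refine ⟨k, l, hkl, rfl, Function.const ι ε, ⟨⟨hεU, antitone_const, fun _ => hε.le⟩, ?_⟩, rfl⟩
    exact fun h => hε.ne' (congrFun h k)
  · exact ⟨k, l, hkl, rfl, x, ⟨hx, hx0⟩, hxkl⟩

theorem stmt_1_general [Finite ι] [PartialOrder α] [(𝓝[>] (0 : α)).NeBot] {U : Set (ι → α)}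
    (hU : IsOpen U) {S : Set (ι → α)} (hS : S = U ∩ closedChamber ι α) (hne : S.Nonempty)
    (γ : Perm ι) :
    ((fun x => x ∘ γ) '' S ∩
        ⋃ σ ∈ Subgroup.closure (wallSwaps (S \ {0})), (fun x => x ∘ σ) '' S).Nonempty ↔
      γ ∈ Subgroup.closure (wallSwaps (S \ {0})) := by
  subst hS
  rw [wallSwaps_inter_closedChamber_sdiff_zero hU]
  exact image_comp_inter_iUnion_closure_wallSwaps_nonempty_iff (fun _ hx => hx.2.1) hne γ

end Chamber

/-- For every permutation `γ` of `{1,…,r}`, the set `γ·𝒟⁺` intersects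
`W⁰·𝒟⁺` (the union of the sets `w·𝒟⁺` over `w ∈ W⁰`) if and only if `γ ∈ W⁰`. -/
theorem stmt_1 {r : ℕ} (hr : 1 ≤ r)
    (Q : Set (Fin r → ℝ)) (hQ : Q = {x | ∀ i, 0 ≤ x i})
    (Cplus : Set (Fin r → ℝ))
    (hC : Cplus = {x | (∀ i j : Fin r, i ≤ j → x j ≤ x i) ∧ ∀ i, 0 ≤ x i})
    (D : Set (Fin r → ℝ))
    (hDQ : D ⊆ Q) (hDne : D.Nonempty)
    (hDinv : ∀ σ : Equiv.Perm (Fin r), (fun x => x ∘ σ) '' D = D)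
    (hDopen : ∃ U : Set (Fin r → ℝ), IsOpen U ∧ D = U ∩ Q)
    (Dplus : Set (Fin r → ℝ)) (hDplus : Dplus = D ∩ Cplus)
    (hconn : IsConnected Dplus)
    (Γ0 : Set (Equiv.Perm (Fin r)))
    (hΓ0 : Γ0 = {σ | ∃ k l : Fin r, (k : ℕ) + 1 = (l : ℕ) ∧
        σ = Equiv.swap k l ∧ ∃ x ∈ Dplus, x ≠ 0 ∧ x k = x l})
    (W0 : Subgroup (Equiv.Perm (Fin r))) (hW0 : W0 = Subgroup.closure Γ0) :
    ∀ γ : Equiv.Perm (Fin r),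
      ((fun x => x ∘ γ) '' Dplus ∩ ⋃ σ ∈ W0, (fun x => x ∘ σ) '' Dplus).Nonempty
        ↔ γ ∈ W0 := by
  obtain ⟨U, hU, rfl⟩ := hDopen
  have hS : Dplus = U ∩ closedChamber (Fin r) ℝ := by
    rw [hDplus, hQ, hC, inter_assoc]
    exact congrArg (U ∩ ·) (inter_eq_right.mpr fun _ hx => hx.2)
  have hΓ : Γ0 = wallSwaps (Dplus \ {0}) := by
    simp only [hΓ0, wallSwaps, Set.mem_sdiff, mem_singleton_iff, and_assoc, Fin.covBy_iff,
      Nat.covBy_iff_add_one_eq, ne_eq]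
  subst hW0 hΓ
  exact stmt_1_general hU hS hconn.nonempty
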